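/- There is a universal constant C > 0 (independent of a, b, m) such that the following holds. Let w : [a,b] → ℝ be a continuous concave function with w′₊(a) − w′₋(b) ≤ M, where −∞ < a < b < ∞ and w′₊, w′₋ denote right and left derivatives. Then there exist an integer m ≥ 1 and a partition a = x₀ < x₁ < ⋯ < x_m = b with min_{i=1,…,m}(x_i − x_{i−1}) ≥ (b−a)(2m)^{−2} such that the piecewise linear approximant w̃_m built from this partition satisfies sup_{x ∈ [a,b]} |w(x) − w̃_m(x)| ≤ C M (b−a)/m². Moreover, for every integer r ≥ 1 such a partition can be chosen with r ≤ m ≤ 14r + 1. -/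

import Mathlib

open MeasureTheory Real Set intervalIntegral

/-- `wt` is the piecewise linear approximant of `w` built from the partition
`a = x 0 < ⋯ < x m = b`: at each midpoint `(x (i-1) + x i)/2` it takes the average
value of `w` over `[x (i-1), x i]`, it is affine between consecutive midpoints, and
it is affine (linearly extended) on `[x 0, (x 1 + x 2)/2]` and on
`[(x (m-2) + x (m-1))/2, x m]`. -/
def IsPLApproximant (m : ℕ) (x : ℕ → ℝ) (w wt : ℝ → ℝ) : Prop :=
  (∀ i, 1 ≤ i → i ≤ m →
      wt ((x (i - 1) + x i) / 2) =
        (1 / (x i - x (i - 1))) * ∫ s in (x (i - 1))..(x i), w s) ∧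
  (∀ i, 2 ≤ i → i ≤ m → ∃ c d : ℝ,
      ∀ y ∈ Icc ((x (i - 2) + x (i - 1)) / 2) ((x (i - 1) + x i) / 2),
        wt y = c * y + d) ∧
  (∃ c d : ℝ, ∀ y ∈ Icc (x 0) ((x 1 + x 2) / 2), wt y = c * y + d) ∧
  (∃ c d : ℝ, ∀ y ∈ Icc ((x (m - 2) + x (m - 1)) / 2) (x m), wt y = c * y + d)

/-!
Let `g` be a supergradient of `w`, decreasing from `w′₊(a)` to `w′₋(b)`. Over two adjacent cells on
each of which (length) × (drop of `g`) is at most `E`, the tangent at the common endpoint lies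
between `w` and `w + E`. Averaging preserves this at the two midpoints, and the chord of the
averages, extrapolated by at most half a cell on either side, stays within `2E` of `w`.

To make all products small, cut `[a, b]` into `n` equal blocks and block `l`, over which `g` drops
by `V l`, into `p l = ⌊n V l / M⌋ + 1` equal cells. A cell then has length `(b - a) / (n p l)` and
drop at most `V l ≤ p l M / n`, so the product is at most `M (b - a) / n²`, while `∑ V l ≤ M`
bounds the number of cells by `2n`.
-/

section Supergradient

/-- `g` selects, at each point of `s`, the slope of a line supporting the graph of `f` on `s` from
above. -/
def IsSupergradientOn (s : Set ℝ) (f g : ℝ → ℝ) : Prop :=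
  ∀ p ∈ s, ∀ y ∈ s, f y ≤ f p + g p * (y - p)

variable {s : Set ℝ} {f g : ℝ → ℝ}

lemma le_tangent_of_hasDerivWithinAt {d p y : ℝ} (hf : ConcaveOn ℝ s f) (hp : p ∈ s)
    (hd : HasDerivWithinAt f d s p) (hy : y ∈ s) : f y ≤ f p + d * (y - p) := by
  rcases lt_trichotomy y p with hlt | rfl | hgt
  · have hslope := hf.le_slope_of_hasDerivWithinAt hy hp hlt hd
    rw [slope_def_field, le_div_iff₀ (sub_pos.2 hlt)] at hslope
    linarith
  · simp
  · have hslope := hf.slope_le_of_hasDerivWithinAt hp hy hgt hd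
    rw [slope_def_field, div_le_iff₀ (sub_pos.2 hgt)] at hslope
    linarith

lemma exists_tangent_le_of_mem_interior {p : ℝ} (hf : ConvexOn ℝ s f) (hp : p ∈ interior s) :
    ∃ d : ℝ, ∀ y ∈ s, f p + d * (y - p) ≤ f y := by
  refine ⟨derivWithin f (Ioi p) p, fun y hy => ?_⟩
  rcases lt_trichotomy y p with hlt | rfl | hgt
  · have hslope := (hf.slope_le_leftDeriv_of_mem_interior hy hp hlt).trans
      (hf.leftDeriv_le_rightDeriv_of_mem_interior hp)
    rw [slope_def_field, div_le_iff₀ (sub_pos.2 hlt)] at hslope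
    linarith
  · simp
  · have hslope := hf.rightDeriv_le_slope_of_mem_interior hp hy hgt
    rw [slope_def_field, le_div_iff₀ (sub_pos.2 hgt)] at hslope
    linarith

lemma exists_le_tangent_of_mem_interior {p : ℝ} (hf : ConcaveOn ℝ s f) (hp : p ∈ interior s) :
    ∃ d : ℝ, ∀ y ∈ s, f y ≤ f p + d * (y - p) := by
  obtain ⟨d, hd⟩ := exists_tangent_le_of_mem_interior hf.neg hp
  refine ⟨-d, fun y hy => ?_⟩
  have := hd y hy
  simp only [Pi.neg_apply] at this
  linarith

lemma exists_isSupergradientOn_Icc {a b dA dB : ℝ} (hab : a < b) (hf : ConcaveOn ℝ (Icc a b) f)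
    (hA : HasDerivWithinAt f dA (Icc a b) a) (hB : HasDerivWithinAt f dB (Icc a b) b) :
    ∃ g : ℝ → ℝ, g a = dA ∧ g b = dB ∧ IsSupergradientOn (Icc a b) f g := by
  have hinterior : ∀ p ∈ Ioo a b, ∃ d : ℝ, ∀ y ∈ Icc a b, f y ≤ f p + d * (y - p) := fun p hp =>
    exists_le_tangent_of_mem_interior hf (by rwa [interior_Icc])
  choose! g hg using hinterior
  refine ⟨Function.update (Function.update g a dA) b dB, by simp [hab.ne], by simp,
    fun p hp y hy => ?_⟩
  rcases eq_or_ne p b with rfl | hpb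
  · simpa using le_tangent_of_hasDerivWithinAt hf hp hB hy
  rcases eq_or_ne p a with rfl | hpa
  · simpa [hpb] using le_tangent_of_hasDerivWithinAt hf hp hA hy
  · simpa [hpa, hpb] using hg p ⟨hp.1.lt_of_ne' hpa, hp.2.lt_of_ne hpb⟩ y hy

namespace IsSupergradientOn

lemma antitoneOn (hg : IsSupergradientOn s f g) : AntitoneOn g s := by
  intro p hp q hq hpq
  rcases hpq.eq_or_lt with rfl | hlt
  · exact le_rfl
  · have hprod : 0 ≤ (g p - g q) * (q - p) := by linarith [hg p hp q hq, hg q hq p hp]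
    exact sub_nonneg.1 (nonneg_of_mul_nonneg_left hprod (sub_pos.2 hlt))

lemma tangent_sub_mem_Icc {p c q E : ℝ} (hg : IsSupergradientOn s f g) (hs : Icc p q ⊆ s)
    (hpc : p ≤ c) (hcq : c ≤ q) (hleft : (c - p) * (g p - g c) ≤ E)
    (hright : (q - c) * (g c - g q) ≤ E) {z : ℝ} (hz : z ∈ Icc p q) :
    f c + g c * (z - c) - f z ∈ Icc 0 E := by
  have hps : p ∈ s := hs ⟨le_rfl, hpc.trans hcq⟩
  have hcs : c ∈ s := hs ⟨hpc, hcq⟩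
  have hqs : q ∈ s := hs ⟨hpc.trans hcq, le_rfl⟩
  have hzs : z ∈ s := hs hz
  have hprod : (z - c) * (g c - g z) ≤ E := by
    rcases le_total z c with hzc | hcz
    · have hgzc : g c ≤ g z := hg.antitoneOn hzs hcs hzc
      have hgpz : g z ≤ g p := hg.antitoneOn hps hzs hz.1
      calc (z - c) * (g c - g z) = (c - z) * (g z - g c) := by ring
        _ ≤ (c - p) * (g p - g c) := by apply mul_le_mul <;> linarith [hz.1]
        _ ≤ E := hleft
    · have hgcz : g z ≤ g c := hg.antitoneOn hcs hzs hcz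
      have hgzq : g q ≤ g z := hg.antitoneOn hzs hqs hz.2
      exact (mul_le_mul (by linarith [hz.2]) (by linarith) (by linarith) (by linarith)).trans hright
  exact ⟨by linarith [hg c hcs z hzs], by linarith [hg z hzs c hcs]⟩

end IsSupergradientOn

end Supergradient

section AverageChord

variable {w : ℝ → ℝ} {p c q : ℝ}

lemma intervalAverage_mem_Icc {lo hi : ℝ} (hpq : p < q) (hw : IntervalIntegrable w volume p q)
    (hmem : ∀ z ∈ Icc p q, w z ∈ Icc lo hi) : ⨍ s in p..q, w s ∈ Icc lo hi := by
  rw [uIoc_of_le hpq.le]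
  refine (convex_Icc lo hi).set_average_mem isClosed_Icc (by simpa using hpq) (by simp) ?_
    ((intervalIntegrable_iff_integrableOn_Ioc_of_le hpq.le).1 hw)
  exact (ae_restrict_mem measurableSet_Ioc).mono fun z hz => hmem z (Ioc_subset_Icc_self hz)

lemma intervalAverage_affine_sub (hpq : p < q) (hw : IntervalIntegrable w volume p q)
    (u d z₀ : ℝ) :
    ⨍ s in p..q, (u + d * (s - z₀) - w s) = u + d * ((p + q) / 2 - z₀) - ⨍ s in p..q, w s := by
  have hne : q - p ≠ 0 := (sub_pos.2 hpq).ne'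
  have haffine : Continuous fun s : ℝ => u + d * (s - z₀) := by fun_prop
  have hlinear : Continuous fun s : ℝ => d * (s - z₀) := by fun_prop
  simp only [interval_average_eq_div]
  rw [intervalIntegral.integral_sub (haffine.intervalIntegrable p q) hw,
    intervalIntegral.integral_add (by simp) (hlinear.intervalIntegrable p q),
    intervalIntegral.integral_const_mul,
    intervalIntegral.integral_sub (by simp) (by simp), integral_id]
  simp only [intervalIntegral.integral_const, smul_eq_mul]
  field_simp
  ring

lemma affine_midpoint_sub_intervalAverage_mem_Icc {u d z₀ E : ℝ} (hpq : p < q)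
    (hw : IntervalIntegrable w volume p q)
    (hmem : ∀ z ∈ Icc p q, u + d * (z - z₀) - w z ∈ Icc 0 E) :
    u + d * ((p + q) / 2 - z₀) - ⨍ s in p..q, w s ∈ Icc 0 E := by
  have haffine : Continuous fun s : ℝ => u + d * (s - z₀) := by fun_prop
  rw [← intervalAverage_affine_sub hpq hw]
  exact intervalAverage_mem_Icc hpq ((haffine.intervalIntegrable p q).sub hw) hmem

lemma lineMap_mem_Icc_of_mem_Icc {e₀ e₁ E ρ : ℝ} (he₀ : e₀ ∈ Icc 0 E) (he₁ : e₁ ∈ Icc 0 E)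
    (hρ : ρ ∈ Icc (-1) 2) : AffineMap.lineMap e₀ e₁ ρ ∈ Icc (-E) (2 * E) := by
  obtain ⟨he₀, he₀E⟩ := he₀
  obtain ⟨he₁, he₁E⟩ := he₁
  obtain ⟨hρ₁, hρ₂⟩ := hρ
  rw [AffineMap.lineMap_apply_ring]
  rcases le_total ρ 0 with hneg | hpos
  · constructor <;> nlinarith
  · rcases le_total ρ 1 with hle | hge <;> constructor <;> nlinarith

/-- The line through the points whose abscissas are the midpoints of the adjacent cells `[p, c]` and
`[c, q]` and whose ordinates are the averages of `w` over these cells. -/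
noncomputable def averageChord (w : ℝ → ℝ) (p c q y : ℝ) : ℝ :=
  AffineMap.lineMap (⨍ s in p..c, w s) (⨍ s in c..q, w s) ((y - (p + c) / 2) / ((q - p) / 2))

lemma averageChord_left_midpoint (w : ℝ → ℝ) (p c q : ℝ) :
    averageChord w p c q ((p + c) / 2) = ⨍ s in p..c, w s := by
  simp [averageChord]

lemma averageChord_right_midpoint (w : ℝ → ℝ) (c : ℝ) (hpq : p ≠ q) :
    averageChord w p c q ((c + q) / 2) = ⨍ s in c..q, w s := by
  have hparam : ((c + q) / 2 - (p + c) / 2) / ((q - p) / 2) = 1 := by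
    rw [div_eq_one_iff_eq (div_ne_zero (sub_ne_zero.2 hpq.symm) two_ne_zero)]
    ring
  rw [averageChord, hparam, AffineMap.lineMap_apply_one]

lemma exists_averageChord_eq_affine (w : ℝ → ℝ) (p c q : ℝ) :
    ∃ α β : ℝ, ∀ y, averageChord w p c q y = α * y + β := by
  set δ : ℝ := (⨍ s in c..q, w s) - ⨍ s in p..c, w s with hδ
  refine ⟨δ / ((q - p) / 2), (⨍ s in p..c, w s) - δ / ((q - p) / 2) * ((p + c) / 2), fun y => ?_⟩
  rw [averageChord, AffineMap.lineMap_apply_ring', ← hδ]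
  ring

lemma abs_sub_averageChord_le {u d z₀ E y : ℝ} (hpc : p < c) (hcq : c < q)
    (hw : ContinuousOn w (Icc p q)) (hmem : ∀ z ∈ Icc p q, u + d * (z - z₀) - w z ∈ Icc 0 E)
    (hy : y ∈ Icc p q) : |w y - averageChord w p c q y| ≤ 2 * E := by
  have hhalf : 0 < (q - p) / 2 := by linarith
  set ρ : ℝ := (y - (p + c) / 2) / ((q - p) / 2) with hρ
  have hρ_mem : ρ ∈ Icc (-1) 2 :=
    ⟨by rw [hρ, le_div_iff₀ hhalf]; linarith [hy.1], by rw [hρ, div_le_iff₀ hhalf]; linarith [hy.2]⟩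
  have hy_eq : y = (p + c) / 2 + ρ * ((q - p) / 2) := by rw [hρ, div_mul_cancel₀ _ hhalf.ne']; ring
  have hleft := affine_midpoint_sub_intervalAverage_mem_Icc hpc
    ((hw.mono (Icc_subset_Icc_right hcq.le)).intervalIntegrable_of_Icc hpc.le)
    fun z hz => hmem z (Icc_subset_Icc_right hcq.le hz)
  have hright := affine_midpoint_sub_intervalAverage_mem_Icc hcq
    ((hw.mono (Icc_subset_Icc_left hpc.le)).intervalIntegrable_of_Icc hcq.le)
    fun z hz => hmem z (Icc_subset_Icc_left hpc.le hz)
  have hchord : u + d * (y - z₀) - averageChord w p c q y ∈ Icc (-E) (2 * E) := by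
    convert lineMap_mem_Icc_of_mem_Icc hleft hright hρ_mem using 1
    rw [averageChord, ← hρ, AffineMap.lineMap_apply_ring, AffineMap.lineMap_apply_ring, hy_eq]
    ring
  have hwy := hmem y hy
  rw [abs_le]
  constructor <;> linarith [hchord.1, hchord.2, hwy.1, hwy.2]

end AverageChord

section Glue

variable {α β : Type*} [LinearOrder α]

/-- For increasing knots `t`, the function equal to `L k` on `[t k, t (k + 1))` for `k ≤ n`, where
the first piece extends to everything below `t 1` and the last one to everything above `t n`. -/
def gluePieces (n : ℕ) (t : ℕ → α) (L : ℕ → α → β) (y : α) : β :=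
  L (Nat.findGreatest (fun k => t k ≤ y) n) y

lemma gluePieces_eq {n k : ℕ} {t : ℕ → α} {L : ℕ → α → β} {y : α} (ht : StrictMono t)
    (hL : ∀ k < n, L k (t (k + 1)) = L (k + 1) (t (k + 1))) (hkn : k ≤ n)
    (hlower : k ≠ 0 → t k ≤ y) (hupper : k < n → y ≤ t (k + 1)) :
    gluePieces n t L y = L k y := by
  unfold gluePieces
  by_cases hknot : k < n ∧ y = t (k + 1)
  · obtain ⟨hlt, rfl⟩ := hknot
    have hindex : Nat.findGreatest (fun j => t j ≤ t (k + 1)) n = k + 1 :=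
      Nat.findGreatest_eq_iff.2 ⟨hlt, fun _ => le_rfl, fun j hj _ => not_le.2 (ht hj)⟩
    rw [hindex, hL k hlt]
  · have hindex : Nat.findGreatest (fun j => t j ≤ y) n = k := by
      refine Nat.findGreatest_eq_iff.2 ⟨hkn, hlower, fun j hkj hjn => not_le.2 ?_⟩
      have hlt : k < n := by omega
      exact ((hupper hlt).lt_of_ne fun h => hknot ⟨hlt, h⟩).trans_le (ht.monotone hkj)
    rw [hindex]

end Glue

section Approximant

variable {n : ℕ} {x : ℕ → ℝ} {w : ℝ → ℝ}

/-- The piecewise linear approximant of `w` built from the partition `x 0 < ⋯ < x (n + 2)`. Its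
`n + 1` pieces are the chords joining consecutive midpoints. -/
noncomputable def plApproximant (n : ℕ) (x : ℕ → ℝ) (w : ℝ → ℝ) : ℝ → ℝ :=
  gluePieces n (fun k => (x k + x (k + 1)) / 2)
    fun k => averageChord w (x k) (x (k + 1)) (x (k + 2))

lemma strictMono_midpoints (hx : StrictMono x) : StrictMono fun k => (x k + x (k + 1)) / 2 := by
  intro i j hij
  have hleft := hx hij
  have hright := hx (Nat.succ_lt_succ hij)
  dsimp only
  linarith

lemma plApproximant_eq {k : ℕ} {y : ℝ} (hx : StrictMono x) (hkn : k ≤ n)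
    (hlower : k ≠ 0 → (x k + x (k + 1)) / 2 ≤ y)
    (hupper : k < n → y ≤ (x (k + 1) + x (k + 2)) / 2) :
    plApproximant n x w y = averageChord w (x k) (x (k + 1)) (x (k + 2)) y := by
  refine gluePieces_eq (strictMono_midpoints hx) (fun j _ => ?_) hkn hlower hupper
  rw [averageChord_right_midpoint w _ (hx (by omega)).ne, averageChord_left_midpoint]

lemma plApproximant_midpoint {k : ℕ} (hx : StrictMono x) (hk : k ≤ n + 1) :
    plApproximant n x w ((x k + x (k + 1)) / 2) = ⨍ s in x k..x (k + 1), w s := by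
  have hmid := strictMono_midpoints hx
  rcases hk.lt_or_eq with hlt | rfl
  · rw [plApproximant_eq hx (Nat.lt_succ_iff.1 hlt) (fun _ => le_rfl)
      (fun _ => (hmid k.lt_succ_self).le), averageChord_left_midpoint]
  · rw [plApproximant_eq hx le_rfl (fun _ => (hmid n.lt_succ_self).le)
      (fun h => absurd h n.lt_irrefl), averageChord_right_midpoint w _ (hx (by omega)).ne]

lemma isPLApproximant_plApproximant (hx : StrictMono x) :
    IsPLApproximant (n + 2) x w (plApproximant n x w) := by
  have haffine : ∀ k ≤ n, ∀ S : Set ℝ, (∀ y ∈ S, k ≠ 0 → (x k + x (k + 1)) / 2 ≤ y) →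
      (∀ y ∈ S, k < n → y ≤ (x (k + 1) + x (k + 2)) / 2) →
      ∃ c d : ℝ, ∀ y ∈ S, plApproximant n x w y = c * y + d := by
    intro k hk S hlower hupper
    obtain ⟨c, d, hcd⟩ := exists_averageChord_eq_affine w (x k) (x (k + 1)) (x (k + 2))
    exact ⟨c, d, fun y hy => by
      rw [plApproximant_eq hx hk (hlower y hy) (hupper y hy), hcd]⟩
  refine ⟨fun i hi him => ?_, fun i hi him => ?_, ?_, ?_⟩
  · obtain ⟨k, rfl⟩ := Nat.exists_eq_add_of_le' hi
    rw [Nat.add_sub_cancel, plApproximant_midpoint hx (by omega), interval_average_eq, one_div,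
      smul_eq_mul]
  · obtain ⟨k, rfl⟩ := Nat.exists_eq_add_of_le' hi
    exact haffine k (by omega) _ (fun y hy _ => hy.1) (fun y hy _ => hy.2)
  · exact haffine 0 n.zero_le _ (fun y _ h => absurd rfl h) (fun y hy _ => hy.2)
  · exact haffine n le_rfl _ (fun y hy _ => hy.1) (fun y _ h => absurd h n.lt_irrefl)

lemma abs_sub_plApproximant_le_of_averageChord {ε y : ℝ} (hx : StrictMono x)
    (hchord : ∀ k ≤ n, ∀ y ∈ Icc (x k) (x (k + 2)),
      |w y - averageChord w (x k) (x (k + 1)) (x (k + 2)) y| ≤ ε)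
    (hy : y ∈ Icc (x 0) (x (n + 2))) : |w y - plApproximant n x w y| ≤ ε := by
  obtain ⟨k, hk⟩ : ∃ k, Nat.findGreatest (fun k => (x k + x (k + 1)) / 2 ≤ y) n = k := ⟨_, rfl⟩
  obtain ⟨hkn, hlower, hupper⟩ := Nat.findGreatest_eq_iff.1 hk
  rw [plApproximant, gluePieces, hk]
  refine hchord k hkn y ⟨?_, ?_⟩
  · rcases eq_or_ne k 0 with rfl | hk0
    · exact hy.1
    · linarith [hlower hk0, hx k.lt_succ_self]
  · rcases hkn.eq_or_lt with rfl | hlt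
    · exact hy.2
    · have hlt_midpoint := not_le.1 (hupper k.lt_succ_self hlt)
      linarith [hx (k + 1).lt_succ_self]

lemma IsSupergradientOn.abs_sub_plApproximant_le {g : ℝ → ℝ} {E y : ℝ}
    (hg : IsSupergradientOn (Icc (x 0) (x (n + 2))) w g)
    (hw : ContinuousOn w (Icc (x 0) (x (n + 2)))) (hx : StrictMono x)
    (hE : ∀ i < n + 2, (x (i + 1) - x i) * (g (x i) - g (x (i + 1))) ≤ E)
    (hy : y ∈ Icc (x 0) (x (n + 2))) : |w y - plApproximant n x w y| ≤ 2 * E := by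
  refine abs_sub_plApproximant_le_of_averageChord hx (fun k hk z hz => ?_) hy
  have hcells : Icc (x k) (x (k + 2)) ⊆ Icc (x 0) (x (n + 2)) :=
    Icc_subset_Icc (hx.monotone k.zero_le) (hx.monotone (by omega))
  have hleft : x k < x (k + 1) := hx k.lt_succ_self
  have hright : x (k + 1) < x (k + 2) := hx (k + 1).lt_succ_self
  exact abs_sub_averageChord_le hleft hright (hw.mono hcells)
    (fun _ hz => hg.tangent_sub_mem_Icc hcells hleft.le hright.le (hE k (by omega))
      (hE (k + 1) (by omega)) hz) hz

end Approximant

section Partition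

lemma exists_strictMono_arithmetic_continuation {x : ℕ → ℝ} (hx : StrictMono x) (N : ℕ) {h : ℝ}
    (hh : 0 < h) :
    ∃ x' : ℕ → ℝ, StrictMono x' ∧ (∀ i ≤ N, x' i = x i) ∧ ∀ j : ℕ, x' (N + j) = x N + j * h := by
  set x' : ℕ → ℝ := fun i => if i ≤ N then x i else x N + (i - N : ℕ) * h
  have hx'_le : ∀ i ≤ N, x' i = x i := fun i hi => if_pos hi
  have hx'_add : ∀ j : ℕ, x' (N + j) = x N + j * h := by
    rintro (_ | j)
    · simp [hx'_le]
    · simp [x']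
  refine ⟨x', strictMono_nat_of_lt_succ fun i => ?_, hx'_le, hx'_add⟩
  rcases lt_or_ge i N with hlt | hge
  · rw [hx'_le i hlt.le, hx'_le (i + 1) hlt]
    exact hx i.lt_succ_self
  · obtain ⟨j, rfl⟩ := Nat.exists_eq_add_of_le hge
    rw [add_assoc, hx'_add, hx'_add]
    push_cast
    linarith

lemma exists_refinement_equal_cells {t : ℕ → ℝ} (ht : StrictMono t) {p : ℕ → ℕ}
    (hp : ∀ l, 0 < p l) (n : ℕ) :
    ∃ x : ℕ → ℝ, StrictMono x ∧ x 0 = t 0 ∧ x (∑ l ∈ Finset.range n, p l) = t n ∧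
      ∀ i < ∑ l ∈ Finset.range n, p l, ∃ l < n, t l ≤ x i ∧ x (i + 1) ≤ t (l + 1) ∧
        x (i + 1) - x i = (t (l + 1) - t l) / p l := by
  induction n with
  | zero => exact ⟨t, ht, rfl, rfl, by simp⟩
  | succ n ih =>
    obtain ⟨x, hx, hx0, hxN, hcells⟩ := ih
    rw [Finset.sum_range_succ]
    set N := ∑ l ∈ Finset.range n, p l
    have hpn : (0 : ℝ) < p n := by exact_mod_cast hp n
    set h : ℝ := (t (n + 1) - t n) / p n
    have hh_pos : 0 < h := div_pos (sub_pos.2 (ht n.lt_succ_self)) hpn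
    have hph : p n * h = t (n + 1) - t n := mul_div_cancel₀ _ hpn.ne'
    obtain ⟨x', hx', hx'_le, hx'_add⟩ := exists_strictMono_arithmetic_continuation hx N hh_pos
    rw [hxN] at hx'_add
    refine ⟨x', hx', (hx'_le 0 N.zero_le).trans hx0, by rw [hx'_add, hph]; ring, fun i hi => ?_⟩
    rcases lt_or_ge i N with hlt | hge
    · obtain ⟨l, hl, hcell⟩ := hcells i hlt
      rw [hx'_le i hlt.le, hx'_le (i + 1) hlt]
      exact ⟨l, by omega, hcell⟩
    · obtain ⟨j, rfl⟩ := Nat.exists_eq_add_of_le hge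
      have hj : ((j + 1 : ℕ) : ℝ) ≤ p n := by exact_mod_cast (by omega : j + 1 ≤ p n)
      rw [add_assoc, hx'_add, hx'_add]
      refine ⟨n, n.lt_succ_self, le_add_of_nonneg_right (by positivity), ?_, ?_⟩
      · linarith [mul_le_mul_of_nonneg_right hj hh_pos.le]
      · push_cast
        ring

lemma exists_apportionment {n : ℕ} {V : ℕ → ℝ} {M : ℝ} (hV : ∀ l < n, 0 ≤ V l)
    (hsum : ∑ l ∈ Finset.range n, V l ≤ M) :
    ∃ p : ℕ → ℕ, (∀ l, 0 < p l) ∧ (∀ l < n, n * V l ≤ p l * M) ∧ (∀ l < n, p l ≤ n + 1) ∧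
      ∑ l ∈ Finset.range n, p l ≤ 2 * n := by
  have hV_le : ∀ l < n, V l ≤ M := fun l hl =>
    (Finset.single_le_sum (fun i hi => hV i (Finset.mem_range.1 hi)) (Finset.mem_range.2 hl)).trans
      hsum
  have hM : 0 ≤ M := (Finset.sum_nonneg fun l hl => hV l (Finset.mem_range.1 hl)).trans hsum
  -- If `M = 0`, all `V l` vanish and the quotients are `0` by convention.
  refine ⟨fun l => ⌊n * V l / M⌋₊ + 1, fun l => Nat.succ_pos _, fun l hl => ?_, fun l hl => ?_, ?_⟩
  · rcases hM.eq_or_lt with rfl | hM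
    · have hVl : V l = 0 := (hV_le l hl).antisymm (hV l hl)
      simp [hVl]
    · rw [← div_le_iff₀ hM]
      push_cast
      exact (Nat.lt_floor_add_one _).le
  · refine Nat.succ_le_succ (Nat.floor_le_of_le ?_)
    refine div_le_of_le_mul₀ hM n.cast_nonneg ?_
    gcongr
    exact hV_le l hl
  · have hfloors : ∑ l ∈ Finset.range n, ⌊n * V l / M⌋₊ ≤ n := by
      have : ∑ l ∈ Finset.range n, (⌊n * V l / M⌋₊ : ℝ) ≤ n :=
        calc ∑ l ∈ Finset.range n, (⌊n * V l / M⌋₊ : ℝ)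
            ≤ ∑ l ∈ Finset.range n, n * V l / M := Finset.sum_le_sum fun l hl =>
              Nat.floor_le (div_nonneg (mul_nonneg n.cast_nonneg (hV l (Finset.mem_range.1 hl))) hM)
          _ = n * (∑ l ∈ Finset.range n, V l) / M := by rw [← Finset.sum_div, ← Finset.mul_sum]
          _ ≤ n := div_le_of_le_mul₀ hM n.cast_nonneg (by gcongr)
      exact_mod_cast this
    simp only [Finset.sum_add_distrib, Finset.sum_const, Finset.card_range, smul_eq_mul]
    omega

lemma exists_uniform_grid {a b : ℝ} {n : ℕ} (hab : a < b) (hn : 0 < n) :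
    ∃ t : ℕ → ℝ, StrictMono t ∧ t 0 = a ∧ t n = b ∧ ∀ l, t (l + 1) - t l = (b - a) / n := by
  have hn' : (0 : ℝ) < n := by exact_mod_cast hn
  have hblock : 0 < (b - a) / n := div_pos (sub_pos.2 hab) hn'
  refine ⟨fun l => a + l * ((b - a) / n), strictMono_nat_of_lt_succ fun l => ?_, by simp, ?_,
    fun l => by push_cast; ring⟩
  · push_cast
    linarith
  · dsimp only
    rw [mul_div_cancel₀ _ hn'.ne', add_sub_cancel]

lemma exists_partition_mul_drop_le {a b M : ℝ} {g : ℝ → ℝ} {n : ℕ} (hab : a < b)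
    (hg : AntitoneOn g (Icc a b)) (hM : g a - g b ≤ M) (hn : 0 < n) :
    ∃ (m : ℕ) (x : ℕ → ℝ), n ≤ m ∧ m ≤ 2 * n ∧ StrictMono x ∧ x 0 = a ∧ x m = b ∧
      (∀ i < m, (b - a) / n / (n + 1 : ℕ) ≤ x (i + 1) - x i) ∧
      ∀ i < m, (x (i + 1) - x i) * (g (x i) - g (x (i + 1))) ≤ M * (b - a) / (n : ℝ) ^ 2 := by
  have : (0 : ℝ) < n := by exact_mod_cast hn
  have := sub_pos.2 hab
  obtain ⟨t, ht, ht0, htn, hstep⟩ := exists_uniform_grid hab hn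
  have ht_mem : ∀ l ≤ n, t l ∈ Icc a b := fun l hl =>
    ⟨ht0 ▸ ht.monotone l.zero_le, htn ▸ ht.monotone hl⟩
  obtain ⟨p, hp_pos, hdrop, hp_le, hp_sum⟩ :=
    exists_apportionment (n := n) (V := fun l => g (t l) - g (t (l + 1))) (M := M)
      (fun l hl => sub_nonneg.2 (hg (ht_mem l hl.le) (ht_mem (l + 1) hl) (ht l.lt_succ_self).le))
      (by rwa [Finset.sum_range_sub', ht0, htn])
  obtain ⟨x, hx, hx0, hxm, hcells⟩ := exists_refinement_equal_cells ht hp_pos n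
  refine ⟨_, x, ?_, hp_sum, hx, hx0.trans ht0, hxm.trans htn, fun i hi => ?_, fun i hi => ?_⟩
  · simpa using Finset.card_nsmul_le_sum (Finset.range n) p 1 fun l _ => hp_pos l
  all_goals
    obtain ⟨l, hl, hlower, hupper, hlen⟩ := hcells i hi
    have hpl : (0 : ℝ) < p l := by exact_mod_cast hp_pos l
    rw [hlen, hstep]
  · gcongr
    exact hp_le l hl
  · have hcell : x i ≤ x (i + 1) := (hx i.lt_succ_self).le
    have hlow_mem := ht_mem l hl.le
    have hupp_mem := ht_mem (l + 1) hl
    have hleft : g (x i) ≤ g (t l) :=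
      hg hlow_mem ⟨hlow_mem.1.trans hlower, hcell.trans (hupper.trans hupp_mem.2)⟩ hlower
    have hright : g (t (l + 1)) ≤ g (x (i + 1)) :=
      hg ⟨hlow_mem.1.trans (hlower.trans hcell), hupper.trans hupp_mem.2⟩ hupp_mem hupper
    calc (b - a) / n / p l * (g (x i) - g (x (i + 1)))
        ≤ (b - a) / n / p l * (g (t l) - g (t (l + 1))) := by gcongr
      _ = (b - a) / n / n / p l * (n * (g (t l) - g (t (l + 1)))) := by field_simp
      _ ≤ (b - a) / n / n / p l * (p l * M) :=
        mul_le_mul_of_nonneg_left (hdrop l hl) (by positivity)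
      _ = M * (b - a) / (n : ℝ) ^ 2 := by field_simp

lemma exists_balanced_partition {a b M : ℝ} {g : ℝ → ℝ} {n : ℕ} (hab : a < b)
    (hg : AntitoneOn g (Icc a b)) (hM : g a - g b ≤ M) (hn : 0 < n) :
    ∃ (m : ℕ) (x : ℕ → ℝ), n ≤ m ∧ m ≤ 2 * n ∧ StrictMono x ∧ x 0 = a ∧ x m = b ∧
      (∀ i < m, (b - a) / (2 * (m : ℝ)) ^ 2 ≤ x (i + 1) - x i) ∧
      ∀ i < m, (x (i + 1) - x i) * (g (x i) - g (x (i + 1))) ≤ 4 * M * (b - a) / (m : ℝ) ^ 2 := by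
  obtain ⟨m, x, hnm, hmn, hx, hx0, hxm, hgap, hdrop⟩ := exists_partition_mul_drop_le hab hg hM hn
  have hM0 : 0 ≤ M :=
    (sub_nonneg.2 (hg (left_mem_Icc.2 hab.le) (right_mem_Icc.2 hab.le) hab.le)).trans hM
  have := sub_pos.2 hab
  have hn1 : (1 : ℝ) ≤ n := by exact_mod_cast hn
  have hnm' : (n : ℝ) ≤ m := by exact_mod_cast hnm
  have hmn' : (m : ℝ) ≤ 2 * n := by exact_mod_cast hmn
  have hm0 : (0 : ℝ) < m := by linarith
  refine ⟨m, x, hnm, hmn, hx, hx0, hxm, fun i hi => le_trans ?_ (hgap i hi),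
    fun i hi => (hdrop i hi).trans ?_⟩
  · rw [div_div]
    push_cast
    gcongr
    nlinarith
  · calc M * (b - a) / (n : ℝ) ^ 2 = 4 * M * (b - a) / (2 * n : ℝ) ^ 2 := by ring
      _ ≤ 4 * M * (b - a) / (m : ℝ) ^ 2 := by gcongr

end Partition

/-- there is a universal constant `C > 0` such that for every continuous
concave `w : [a,b] → ℝ` with `w′₊(a) − w′₋(b) ≤ M` (one-sided derivatives taken within
`[a,b]`) and every integer `r ≥ 1`, there is a partition `a = x 0 < ⋯ < x m = b` with
`r ≤ m ≤ 14r + 1` and `min (x (i+1) − x i) ≥ (b−a)(2m)⁻²` whose piecewise linear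
approximant `wt` satisfies `sup_{[a,b]} |w − wt| ≤ C M (b−a)/m²`. -/
theorem piecewise_linear_approx_exists :
    ∃ C : ℝ, 0 < C ∧
      ∀ (a b M : ℝ) (w : ℝ → ℝ) (dA dB : ℝ), a < b →
        ContinuousOn w (Icc a b) → ConcaveOn ℝ (Icc a b) w →
        HasDerivWithinAt w dA (Icc a b) a → HasDerivWithinAt w dB (Icc a b) b →
        dA - dB ≤ M →
        ∀ r : ℕ, 1 ≤ r →
          ∃ m : ℕ, r ≤ m ∧ m ≤ 14 * r + 1 ∧
            ∃ x : ℕ → ℝ, x 0 = a ∧ x m = b ∧ (∀ i < m, x i < x (i + 1)) ∧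
              (∀ i < m, (b - a) / (2 * (m : ℝ)) ^ 2 ≤ x (i + 1) - x i) ∧
              ∃ wt : ℝ → ℝ, IsPLApproximant m x w wt ∧
                ∀ y ∈ Icc a b, |w y - wt y| ≤ C * M * (b - a) / (m : ℝ) ^ 2 := by
  refine ⟨8, by norm_num, fun a b M w dA dB hab hw hconcave hA hB hM r hr => ?_⟩
  obtain ⟨g, rfl, rfl, hg⟩ := exists_isSupergradientOn_Icc hab hconcave hA hB
  obtain ⟨m, x, hrm, hmr, hx, rfl, rfl, hgap, hdrop⟩ :=
    exists_balanced_partition hab hg.antitoneOn hM r.succ_pos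
  obtain ⟨n, rfl⟩ : ∃ n, m = n + 2 := Nat.exists_eq_add_of_le' (by omega)
  refine ⟨n + 2, by omega, by omega, x, rfl, rfl, fun i _ => hx i.lt_succ_self, hgap,
    plApproximant n x w, isPLApproximant_plApproximant hx, fun y hy => ?_⟩
  exact (hg.abs_sub_plApproximant_le hw hx hdrop hy).trans_eq (by ring)
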